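/- Let f(x) = a·x² + b·x + c with a ≥ 1 and b, c ≥ 0. The in-degrees of the q-Jaco graph are stepwise consecutive: for every k ∈ ℕ, d⁻(v_{k+1}) equals either d⁻(v_k) or d⁻(v_k) + 1. -/

import Mathlib

/-- In-degree of vertex `v_j` in the (root) Jaco graph with incidence function `f`:
`d⁻(v_j) = |{ i : 1 ≤ i < j, i + f i − d⁻(v_i) ≥ j }|`. -/
noncomputable def jacoIn (f : ℕ → ℕ) (j : ℕ) : ℕ :=
  Nat.strongRecOn j (fun j ih =>
    (((Finset.Ico 1 j).attach).filter (fun i : {x // x ∈ Finset.Ico 1 j} =>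
      j ≤ i.1 + f i.1 - ih i.1 (Finset.mem_Ico.mp i.2).2)).card)

/-- The arc `(v_i, v_j)` is present in the Jaco graph iff `1 ≤ i < j` and
`i + f i − d⁻(v_i) ≥ j`. -/
def jacoArc (f : ℕ → ℕ) (i j : ℕ) : Prop :=
  1 ≤ i ∧ i < j ∧ j ≤ i + f i - jacoIn f i

noncomputable instance (f : ℕ → ℕ) (i j : ℕ) : Decidable (jacoArc f i j) := by
  unfold jacoArc; infer_instance

/-- The underlying undirected simple graph `J*_n(f)` of the finite Jaco graph `J_n(f)`,
on vertex set `{v_1, …, v_n}` (vertex `x : Fin n` represents `v_{x+1}`). -/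
def jacoGraph (f : ℕ → ℕ) (n : ℕ) : SimpleGraph (Fin n) :=
  SimpleGraph.fromRel (fun x y => jacoArc f (x.1 + 1) (y.1 + 1))

noncomputable instance (f : ℕ → ℕ) (n : ℕ) : DecidableRel (jacoGraph f n).Adj := fun x y =>
  decidable_of_iff
    (x ≠ y ∧ (jacoArc f (x.1 + 1) (y.1 + 1) ∨ jacoArc f (y.1 + 1) (x.1 + 1)))
    (by unfold jacoGraph; exact (SimpleGraph.fromRel_adj (fun a b : Fin n => jacoArc f (a.1 + 1) (b.1 + 1)) x y).symm)

/-!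
Passing from `v_j` to `v_{j+1}` can only create one new in-neighbour, `v_j` itself, so in-degrees
grow by at most one per step, for every incidence function. If `f` is strictly increasing, its
increment compensates for that growth, so shifting both ends of an arc by one gives an arc again;
the shift embeds the in-neighbours of `v_j` into those of `v_{j+1}`, and in-degrees never drop.
-/

/-- The in-neighbourhood of `v_j` in the root Jaco graph of `f`, as a set of indices. Ranging over
`i < j` loses nothing, since `jacoArc f i j` includes `i < j`. -/
noncomputable def jacoInNeighbors (f : ℕ → ℕ) (j : ℕ) : Finset ℕ :=
  {i ∈ Finset.range j | jacoArc f i j}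

section Jaco

variable {f : ℕ → ℕ} {i j : ℕ}

theorem mem_jacoInNeighbors : i ∈ jacoInNeighbors f j ↔ jacoArc f i j := by
  rw [jacoInNeighbors, Finset.mem_filter, Finset.mem_range]
  exact and_iff_right_of_imp fun arc => arc.2.1

theorem card_jacoInNeighbors (f : ℕ → ℕ) (j : ℕ) : (jacoInNeighbors f j).card = jacoIn f j := by
  have neighbors_eq : jacoInNeighbors f j =
      {i ∈ Finset.Ico 1 j | j ≤ i + f i - jacoIn f i} := by
    ext i
    rw [mem_jacoInNeighbors, Finset.mem_filter, Finset.mem_Ico, jacoArc, and_assoc]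
  have jacoIn_eq : jacoIn f j =
      ((Finset.Ico 1 j).attach.filter fun i => j ≤ i.1 + f i.1 - jacoIn f i.1).card := by
    unfold jacoIn
    rw [Nat.strongRecOn_eq]
  rw [neighbors_eq, jacoIn_eq, Finset.filter_attach fun i => j ≤ i + f i - jacoIn f i,
    Finset.card_map, Finset.card_attach]

theorem jacoArc.of_succ_right (h : jacoArc f i (j + 1)) (hij : i ≠ j) : jacoArc f i j := by
  unfold jacoArc at *
  omega

theorem jacoInNeighbors_succ_subset (f : ℕ → ℕ) (j : ℕ) :
    jacoInNeighbors f (j + 1) ⊆ insert j (jacoInNeighbors f j) := by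
  intro i hi
  rw [Finset.mem_insert, or_iff_not_imp_left]
  exact fun hij => mem_jacoInNeighbors.mpr ((mem_jacoInNeighbors.mp hi).of_succ_right hij)

theorem jacoIn_succ_le (f : ℕ → ℕ) (j : ℕ) : jacoIn f (j + 1) ≤ jacoIn f j + 1 := by
  simp only [← card_jacoInNeighbors]
  exact (Finset.card_le_card (jacoInNeighbors_succ_subset f j)).trans (Finset.card_insert_le _ _)

theorem jacoArc.succ_succ (hf : StrictMono f) (h : jacoArc f i j) :
    jacoArc f (i + 1) (j + 1) := by
  have increment : f i < f (i + 1) := hf i.lt_succ_self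
  have indegree : jacoIn f (i + 1) ≤ jacoIn f i + 1 := jacoIn_succ_le f i
  unfold jacoArc at *
  omega

theorem jacoIn_monotone (hf : StrictMono f) : Monotone (jacoIn f) := by
  refine monotone_nat_of_le_succ fun j => ?_
  simp only [← card_jacoInNeighbors]
  exact Finset.card_le_card_of_injOn (· + 1)
    (fun i hi => mem_jacoInNeighbors.mpr ((mem_jacoInNeighbors.mp hi).succ_succ hf))
    (add_left_injective 1).injOn

end Jaco

theorem strictMono_quadratic {a : ℕ} (ha : 0 < a) (b c : ℕ) :
    StrictMono fun x : ℕ => a * x ^ 2 + b * x + c := by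
  intro x y hxy
  have square : a * x ^ 2 < a * y ^ 2 := by gcongr
  have linear : b * x ≤ b * y := by gcongr
  exact Nat.add_lt_add_right (Nat.add_lt_add_of_lt_of_le square linear) c

theorem qJaco_indegrees_stepwise_general {f : ℕ → ℕ} (hf : StrictMono f) (k : ℕ) :
    jacoIn f (k + 1) = jacoIn f k ∨ jacoIn f (k + 1) = jacoIn f k + 1 :=
  Nat.le_and_le_add_one_iff.mp ⟨jacoIn_monotone hf k.le_succ, jacoIn_succ_le f k⟩

/-- For `f(x) = a·x² + b·x + c` (`a ≥ 1`, `b, c ≥ 0`), the in-degrees of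
the q-Jaco graph are stepwise consecutive: for every `k ∈ ℕ` (`k ≥ 1`), `d⁻(v_{k+1})`
equals `d⁻(v_k)` or `d⁻(v_k) + 1`. -/
theorem qJaco_indegrees_stepwise (a b c : ℕ) (ha : 1 ≤ a) (k : ℕ) (hk : 1 ≤ k) :
    jacoIn (fun x => a * x ^ 2 + b * x + c) (k + 1) =
      jacoIn (fun x => a * x ^ 2 + b * x + c) k ∨
    jacoIn (fun x => a * x ^ 2 + b * x + c) (k + 1) =
      jacoIn (fun x => a * x ^ 2 + b * x + c) k + 1 :=
  qJaco_indegrees_stepwise_general (strictMono_quadratic ha b c) k
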